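/- Let γ be a real number with |γ| < 1, and let k_α, k₁, k₂ be nonnegative integers such that (k_α, k₁, k₂) satisfies the triangle inequality and (1+γ)kᵢ/2 and (1−γ)kᵢ/2 are nonnegative integers for i = 1, 2. Then there exist nonnegative integers j⁺_α and j⁻_α with j⁺_α + j⁻_α = k_α such that the triple (j⁺_α, (1+γ)k₁/2, (1+γ)k₂/2) and the triple (j⁻_α, (1−γ)k₁/2, (1−γ)k₂/2) both satisfy the triangle inequality; moreover (j⁺_α, j⁻_α) can be chosen to be either (⌊(1+γ)k_α/2⌉₊, ⌊(1−γ)k_α/2⌉₋) or (⌊(1+γ)k_α/2⌉₋, ⌊(1−γ)k_α/2⌉₊). -/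

import Mathlib

/-- `⌊x⌉₊` : the unique integer in the interval `(x - 1/2, x + 1/2]`. -/
noncomputable def clpPlus (x : ℝ) : ℤ := ⌊x + 1/2⌋

/-- `⌊x⌉₋` : the unique integer in the interval `[x - 1/2, x + 1/2)`. -/
noncomputable def clpMinus (x : ℝ) : ℤ := ⌈x - 1/2⌉

/-- A triple of (nonnegative) reals satisfies the triangle inequality. -/
def Triangle3 (a b c : ℝ) : Prop := a ≤ b + c ∧ b ≤ a + c ∧ c ≤ a + b

/-! Scaling `(k_α, k₁, k₂)` by `(1 ± γ)/2` gives two real triples satisfying the triangle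
inequality. In each of them the first side `x` lies in `[|b - c|, b + c]`, whose endpoints are
integers because `b` and `c` are, so a monotone rounding of `x` that fixes the integers stays in
this interval. Both `⌊·⌉₊` and `⌊·⌉₋` are such roundings, and the reflection `x ↦ -x` interchanges
them, so rounding the two first sides in opposite senses preserves their integer sum `k_α`. -/

theorem clpPlus_eq_round (x : ℝ) : clpPlus x = round x :=
  (round_eq x).symm

theorem clpMinus_eq_neg_clpPlus_neg (x : ℝ) : clpMinus x = -clpPlus (-x) := by
  rw [clpMinus, clpPlus, ← Int.ceil_neg, neg_add, neg_neg, sub_eq_add_neg]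

theorem clpPlus_mono : Monotone clpPlus := fun x y hxy => by
  unfold clpPlus
  gcongr

theorem clpMinus_mono : Monotone clpMinus := fun x y hxy => by
  unfold clpMinus
  gcongr

theorem clpPlus_intCast (n : ℤ) : clpPlus n = n := by
  rw [clpPlus_eq_round, round_intCast]

theorem clpMinus_intCast (n : ℤ) : clpMinus n = n := by
  rw [clpMinus_eq_neg_clpPlus_neg, ← Int.cast_neg, clpPlus_intCast, neg_neg]

theorem clpPlus_add_clpMinus_of_add_eq_intCast {x y : ℝ} {n : ℤ} (h : x + y = n) :
    clpPlus x + clpMinus y = n := by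
  have hy : -y = x - n := by linarith
  rw [clpMinus_eq_neg_clpPlus_neg, hy, clpPlus_eq_round, clpPlus_eq_round, round_sub_intCast]
  ring

theorem triangle3_iff_mem_Icc {a b c : ℝ} : Triangle3 a b c ↔ a ∈ Set.Icc |b - c| (b + c) := by
  rw [Triangle3, Set.mem_Icc, abs_sub_le_iff, sub_le_iff_le_add, sub_le_iff_le_add]
  tauto

namespace Triangle3

theorem nonneg_left {a b c : ℝ} (h : Triangle3 a b c) : 0 ≤ a :=
  (abs_nonneg (b - c)).trans (triangle3_iff_mem_Icc.mp h).1

theorem const_mul {a b c t : ℝ} (h : Triangle3 a b c) (ht : 0 ≤ t) :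
    Triangle3 (t * a) (t * b) (t * c) := by
  obtain ⟨ha, hb, hc⟩ := h
  simp only [Triangle3, ← mul_add]
  exact ⟨by gcongr, by gcongr, by gcongr⟩

theorem map_left {f : ℝ → ℤ} (hf : Monotone f) (hf_int : ∀ n : ℤ, f n = n) {x : ℝ} {b c : ℤ}
    (h : Triangle3 x b c) : Triangle3 (f x) b c := by
  have hx : x ∈ Set.Icc ((|b - c| : ℤ) : ℝ) ((b + c : ℤ) : ℝ) := by
    simpa using triangle3_iff_mem_Icc.mp h
  have hfx : |b - c| ≤ f x ∧ f x ≤ b + c := by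
    simpa only [hf_int, Set.mem_Icc] using hf.mapsTo_Icc hx
  rw [triangle3_iff_mem_Icc, Set.mem_Icc]
  exact_mod_cast hfx

theorem exists_natCast_eq_map_left {f : ℝ → ℤ} (hf : Monotone f) (hf_int : ∀ n : ℤ, f n = n)
    {x b c : ℝ} (hb : ∃ m : ℕ, b = m) (hc : ∃ m : ℕ, c = m) (h : Triangle3 x b c) :
    ∃ j : ℕ, (j : ℤ) = f x ∧ Triangle3 j b c := by
  obtain ⟨m, rfl⟩ := hb
  obtain ⟨n, rfl⟩ := hc
  have hfx : Triangle3 (f x) m n := mod_cast map_left hf hf_int (b := m) (c := n) (mod_cast h)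
  obtain ⟨j, hj⟩ := Int.eq_ofNat_of_zero_le (Int.cast_nonneg_iff.mp hfx.nonneg_left)
  exact ⟨j, hj.symm, by simpa [hj] using hfx⟩

end Triangle3

/-- If `(k_α, k₁, k₂)` are nonnegative integers satisfying the triangle inequality and
`(1±γ)kᵢ/2` are nonnegative integers for `i = 1,2`, then there are nonnegative integers
`j⁺_α, j⁻_α` with `j⁺_α + j⁻_α = k_α` such that `(j⁺_α, (1+γ)k₁/2, (1+γ)k₂/2)` and
`(j⁻_α, (1−γ)k₁/2, (1−γ)k₂/2)` satisfy the triangle inequality; moreover `(j⁺_α, j⁻_α)`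
can be chosen to be `(⌊(1+γ)k_α/2⌉₊, ⌊(1−γ)k_α/2⌉₋)` or `(⌊(1+γ)k_α/2⌉₋, ⌊(1−γ)k_α/2⌉₊)`. -/
theorem exists_simple_split (γ : ℝ) (hγ : |γ| < 1) (kα k₁ k₂ : ℕ)
    (htri : Triangle3 (kα : ℝ) (k₁ : ℝ) (k₂ : ℝ))
    (h1p : ∃ m : ℕ, (1 + γ) * (k₁ : ℝ) / 2 = (m : ℝ))
    (h1m : ∃ m : ℕ, (1 - γ) * (k₁ : ℝ) / 2 = (m : ℝ))
    (h2p : ∃ m : ℕ, (1 + γ) * (k₂ : ℝ) / 2 = (m : ℝ))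
    (h2m : ∃ m : ℕ, (1 - γ) * (k₂ : ℝ) / 2 = (m : ℝ)) :
    ∃ jp jm : ℕ, jp + jm = kα ∧
      Triangle3 (jp : ℝ) ((1 + γ) * (k₁ : ℝ) / 2) ((1 + γ) * (k₂ : ℝ) / 2) ∧
      Triangle3 (jm : ℝ) ((1 - γ) * (k₁ : ℝ) / 2) ((1 - γ) * (k₂ : ℝ) / 2) ∧
      (((jp : ℤ) = clpPlus ((1 + γ) * (kα : ℝ) / 2) ∧
        (jm : ℤ) = clpMinus ((1 - γ) * (kα : ℝ) / 2)) ∨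
       ((jp : ℤ) = clpMinus ((1 + γ) * (kα : ℝ) / 2) ∧
        (jm : ℤ) = clpPlus ((1 - γ) * (kα : ℝ) / 2))) := by
  obtain ⟨hγ_lower, hγ_upper⟩ := abs_lt.mp hγ
  have hp : Triangle3 ((1 + γ) * kα / 2) ((1 + γ) * k₁ / 2) ((1 + γ) * k₂ / 2) := by
    simpa only [div_mul_eq_mul_div] using htri.const_mul (t := (1 + γ) / 2) (by linarith)
  have hm : Triangle3 ((1 - γ) * kα / 2) ((1 - γ) * k₁ / 2) ((1 - γ) * k₂ / 2) := by
    simpa only [div_mul_eq_mul_div] using htri.const_mul (t := (1 - γ) / 2) (by linarith)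
  obtain ⟨jp, hjp, hjp_tri⟩ := hp.exists_natCast_eq_map_left clpPlus_mono clpPlus_intCast h1p h2p
  obtain ⟨jm, hjm, hjm_tri⟩ := hm.exists_natCast_eq_map_left clpMinus_mono clpMinus_intCast h1m h2m
  have hsum : clpPlus ((1 + γ) * kα / 2) + clpMinus ((1 - γ) * kα / 2) = kα :=
    clpPlus_add_clpMinus_of_add_eq_intCast (by push_cast; ring)
  exact ⟨jp, jm, by omega, hjp_tri, hjm_tri, .inl ⟨hjp, hjm⟩⟩
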